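/- For every mixed instance on a simple graph: if there exists a partial orientation (a partial allocation in which every allocated edge goes to one of its two endpoint agents) that is EFX^0_- and satisfies Properties (1)–(8), then there exists a complete allocation of all edges that is EFX^0_-. -/

import Mathlib

open Finset

variable {V : Type*} [DecidableEq V]

/-- `e` has strictly positive marginal value (is a *good*) for the valuation `v`
relative to the item set `M`. -/
def IsGoodFor (v : Finset (Sym2 V) → ℝ) (M : Finset (Sym2 V)) (e : Sym2 V) : Prop :=
  ∀ S ⊆ M.erase e, v S < v (insert e S)

/-- `e` has strictly negative marginal value (is a *chore*) for the valuation `v`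
relative to the item set `M`. -/
def IsChoreFor (v : Finset (Sym2 V) → ℝ) (M : Finset (Sym2 V)) (e : Sym2 V) : Prop :=
  ∀ S ⊆ M.erase e, v (insert e S) < v S

/-- `e` has zero marginal value (is a *dummy*) for the valuation `v`
relative to the item set `M`. -/
def IsDummyFor (v : Finset (Sym2 V) → ℝ) (M : Finset (Sym2 V)) (e : Sym2 V) : Prop :=
  ∀ S ⊆ M.erase e, v (insert e S) = v S

/-- A valid instance on a simple graph: the edge set `M` consists of non-loop edges,
every edge is (for every agent) a good, a chore, or a dummy, and every edge not
incident to an agent is a dummy for that agent. -/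
def ValidInstance (M : Finset (Sym2 V)) (v : V → Finset (Sym2 V) → ℝ) : Prop :=
  (∀ e ∈ M, ¬ e.IsDiag) ∧
  (∀ (i : V), ∀ e ∈ M, IsGoodFor (v i) M e ∨ IsChoreFor (v i) M e ∨ IsDummyFor (v i) M e) ∧
  (∀ (i : V), ∀ e ∈ M, i ∉ e → IsDummyFor (v i) M e)

/-- `X` is a (complete) allocation of the items in `M`: bundles are contained in `M`
and every item belongs to exactly one bundle. -/
def IsAllocation (M : Finset (Sym2 V)) (X : V → Finset (Sym2 V)) : Prop :=
  (∀ i, X i ⊆ M) ∧ ∀ e ∈ M, ∃! i, e ∈ X i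

/-- Every allocated edge goes to one of its endpoint agents. -/
def IsOrientation (X : V → Finset (Sym2 V)) : Prop :=
  ∀ i, ∀ e ∈ X i, i ∈ e

/-- Agent `i` envies agent `j`. -/
def Envies (v : V → Finset (Sym2 V) → ℝ) (X : V → Finset (Sym2 V)) (i j : V) : Prop :=
  v i (X i) < v i (X j)

/-- EFX condition on the envied bundle, removing an item whose removal *strictly*
decreases the value (superscript `+`). -/
def CondEnviedStrict (v : V → Finset (Sym2 V) → ℝ) (X : V → Finset (Sym2 V)) : Prop :=
  ∀ i j, Envies v X i j → ∀ e ∈ X j,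
    v i ((X j).erase e) < v i (X j) → v i ((X j).erase e) ≤ v i (X i)

/-- EFX condition on the envied bundle, removing an item whose removal weakly
decreases the value (superscript `0`). -/
def CondEnviedWeak (v : V → Finset (Sym2 V) → ℝ) (X : V → Finset (Sym2 V)) : Prop :=
  ∀ i j, Envies v X i j → ∀ e ∈ X j,
    v i ((X j).erase e) ≤ v i (X j) → v i ((X j).erase e) ≤ v i (X i)

/-- EFX condition on the envious agent's own bundle, removing an item whose removal
*strictly* increases the value (subscript `-`). -/
def CondOwnStrict (v : V → Finset (Sym2 V) → ℝ) (X : V → Finset (Sym2 V)) : Prop :=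
  ∀ i j, Envies v X i j → ∀ e ∈ X i,
    v i (X i) < v i ((X i).erase e) → v i (X j) ≤ v i ((X i).erase e)

/-- EFX condition on the envious agent's own bundle, removing an item whose removal
weakly increases the value (subscript `0`). -/
def CondOwnWeak (v : V → Finset (Sym2 V) → ℝ) (X : V → Finset (Sym2 V)) : Prop :=
  ∀ i j, Envies v X i j → ∀ e ∈ X i,
    v i (X i) ≤ v i ((X i).erase e) → v i (X j) ≤ v i ((X i).erase e)

open scoped Classical

/-- A partial orientation: pairwise disjoint bundles of edges of `M`, each allocated
edge going to one of its endpoint agents. -/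
def IsPartialOrientation (M : Finset (Sym2 V)) (X : V → Finset (Sym2 V)) : Prop :=
  (∀ i, X i ⊆ M) ∧ (∀ i j, i ≠ j → Disjoint (X i) (X j)) ∧ ∀ i, ∀ e ∈ X i, i ∈ e

/-- `E_i^{≥0}`: the edges of `M` incident to `i` that are goods or dummies for `i`. -/
noncomputable def EgeNonneg (v : V → Finset (Sym2 V) → ℝ) (M : Finset (Sym2 V))
    (i : V) : Finset (Sym2 V) :=
  M.filter (fun e => i ∈ e ∧ (IsGoodFor (v i) M e ∨ IsDummyFor (v i) M e))

/-- `R(X)`: the unallocated edges. -/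
def Unallocated [Fintype V] (M : Finset (Sym2 V)) (X : V → Finset (Sym2 V)) :
    Finset (Sym2 V) :=
  M \ Finset.univ.biUnion X

/-- Agent `i` is envied by some agent. -/
def Envied (v : V → Finset (Sym2 V) → ℝ) (X : V → Finset (Sym2 V)) (i : V) : Prop :=
  ∃ j, Envies v X j i

/-- Agent `j` is *safe* for agent `i`: `i` does not envy `j` even if `j` additionally
receives all of `i`'s unallocated incident non-chore edges. -/
noncomputable def SafeFor [Fintype V] (v : V → Finset (Sym2 V) → ℝ)
    (M : Finset (Sym2 V)) (X : V → Finset (Sym2 V)) (j i : V) : Prop :=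
  v i (X j ∪ (EgeNonneg v M i ∩ Unallocated M X)) ≤ v i (X i)

/-- Properties (1)–(8) of a partial allocation. -/
noncomputable def Props [Fintype V] (M : Finset (Sym2 V))
    (v : V → Finset (Sym2 V) → ℝ) (X : V → Finset (Sym2 V)) : Prop :=
  -- (1)
  (∀ i : V, ∀ e ∈ EgeNonneg v M i ∩ Unallocated M X, v i {e} ≤ v i (X i)) ∧
  -- (2)
  (∀ i : V, Envied v X i → v i (EgeNonneg v M i ∩ Unallocated M X) ≤ v i (X i)) ∧
  -- (3)
  (∀ i j : V, Envied v X i → Envied v X j →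
      ∃ k, ¬ Envied v X k ∧ SafeFor v M X k i ∧ SafeFor v M X k j) ∧
  -- (4)
  (∀ i : V, ∀ e ∈ X i, ¬ IsChoreFor (v i) M e) ∧
  -- (5)
  (∀ i : V, Envied v X i → (X i).card = 1) ∧
  -- (6)
  (∀ i : V, Envied v X i → ∃! j, Envies v X j i) ∧
  -- (7): no envy cycle
  (∀ i : V, ¬ Relation.TransGen (Envies v X) i i) ∧
  -- (8)
  (∀ (s : ℕ) (f : ℕ → V), 1 ≤ s →
      (∀ l, 1 ≤ l → l ≤ s → Envies v X (f l) (f (l - 1))) →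
      ¬ Envied v X (f s) →
      ∀ l, 1 ≤ l → l ≤ s → SafeFor v M X (f l) (f 0))

/-!
Every unallocated edge `e` is handed to an agent `k` for whom it is not a chore, chosen so that
everyone who already envies `k` regards `e` as a chore, and so that either `k` is an endpoint of
`e` or `k` is safe for each endpoint that does not regard `e` as a chore. An agent `i` then envies
nobody new: not the agents who are safe for `i`, and no other agent `k` either, because a good for
`i` in `k`'s bundle can only be the edge `s(i, k)`, whose value is controlled by Property (1).
Where envy persists, the bundle consists of a single edge together with chores for the envious
agent, and is harmless.

Such a `k` is a non-envied endpoint, or a non-envied agent who is safe for the endpoints in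
question, or one of the last two agents on the envy chain above some envied agent. The search fails
only if there are no agents besides the endpoints of `e`; then `e` is the only edge and any
allocation of it works.
-/

theorem exists_chain_to_minimal {α : Type*} [Finite α] {r : α → α → Prop}
    (hr : ∀ a, ¬ Relation.TransGen r a a) (a : α) :
    ∃ (s : ℕ) (f : ℕ → α), f 0 = a ∧ (∀ l < s, r (f (l + 1)) (f l)) ∧ ∀ b, ¬ r b (f s) := by
  have hwf : WellFounded r :=
    haveI : Std.Irrefl (Relation.TransGen r) := ⟨hr⟩
    (Finite.wellFounded_of_trans_of_irrefl (Relation.TransGen r)).mono fun _ _ => .single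
  induction a using hwf.induction with
  | _ a ih =>
    by_cases ha : ∃ b, r b a
    · obtain ⟨b, hba⟩ := ha
      obtain ⟨s, f, rfl, hf, hs⟩ := ih b hba
      refine ⟨s + 1, fun n => n.casesOn a f, rfl, ?_, hs⟩
      rintro (_ | l) hl
      exacts [hba, hf l (by omega)]
    · exact ⟨0, fun _ => a, rfl, by simp, not_exists.1 ha⟩

/-! ### Valuations by goods, chores and dummies -/

section Valuation

variable {M S T : Finset (Sym2 V)} {w : Finset (Sym2 V) → ℝ} {e : Sym2 V}

/-- A mixed valuation on the item set `M`: every item is a good, a chore or a dummy. This is the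
condition that `ValidInstance` imposes on each single agent. -/
def IsMixedValuation (w : Finset (Sym2 V) → ℝ) (M : Finset (Sym2 V)) : Prop :=
  ∀ e ∈ M, IsGoodFor w M e ∨ IsChoreFor w M e ∨ IsDummyFor w M e

theorem IsGoodFor.not_isChoreFor (h : IsGoodFor w M e) : ¬ IsChoreFor w M e := fun hc =>
  lt_asymm (h ∅ (empty_subset _)) (hc ∅ (empty_subset _))

theorem IsDummyFor.not_isChoreFor (h : IsDummyFor w M e) : ¬ IsChoreFor w M e := fun hc =>
  (hc ∅ (empty_subset _)).ne (h ∅ (empty_subset _))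

theorem IsDummyFor.not_isGoodFor (h : IsDummyFor w M e) : ¬ IsGoodFor w M e := fun hg =>
  (hg ∅ (empty_subset _)).ne' (h ∅ (empty_subset _))

theorem IsChoreFor.lt_erase (h : IsChoreFor w M e) (heS : e ∈ S) (hS : S ⊆ M) :
    w S < w (S.erase e) := by
  simpa only [insert_erase heS] using h (S.erase e) (erase_subset_erase e hS)

theorem isGoodFor_neg : IsGoodFor (-w) M e ↔ IsChoreFor w M e := by
  simp only [IsGoodFor, IsChoreFor, Pi.neg_apply, neg_lt_neg_iff]

theorem isChoreFor_neg : IsChoreFor (-w) M e ↔ IsGoodFor w M e := by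
  simp only [IsGoodFor, IsChoreFor, Pi.neg_apply, neg_lt_neg_iff]

theorem isDummyFor_neg : IsDummyFor (-w) M e ↔ IsDummyFor w M e := by
  simp only [IsDummyFor, Pi.neg_apply, neg_inj]

namespace IsMixedValuation

theorem neg (hw : IsMixedValuation w M) : IsMixedValuation (-w) M := by
  intro e he
  rw [isGoodFor_neg, isChoreFor_neg, isDummyFor_neg]
  exact or_left_comm.1 (hw e he)

theorem le_insert (hw : IsMixedValuation w M) (he : e ∈ M) (hc : ¬ IsChoreFor w M e)
    (hS : S ⊆ M.erase e) : w S ≤ w (insert e S) := by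
  rcases hw e he with hgood | hchore | hdummy
  exacts [(hgood S hS).le, absurd hchore hc, (hdummy S hS).ge]

theorem le_of_subset (hw : IsMixedValuation w M) (hST : S ⊆ T) (hT : T ⊆ M)
    (h : ∀ e ∈ T, e ∉ S → ¬ IsChoreFor w M e) : w S ≤ w T := by
  suffices hadd : ∀ A ⊆ T \ S, w S ≤ w (S ∪ A) by
    simpa only [union_sdiff_of_subset hST] using hadd (T \ S) Subset.rfl
  intro A
  induction A using Finset.induction_on with
  | empty => simp
  | insert a A haA ih =>
    intro hA
    obtain ⟨ha, hA⟩ := insert_subset_iff.1 hA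
    obtain ⟨haT, haS⟩ := mem_sdiff.1 ha
    have hsub : S ∪ A ⊆ M.erase a :=
      subset_erase.2 ⟨(union_subset hST (hA.trans sdiff_subset)).trans hT, by simp [haS, haA]⟩
    rw [union_insert]
    exact (ih hA).trans (hw.le_insert (hT haT) (h a haT haS) hsub)

theorem ge_of_subset (hw : IsMixedValuation w M) (hST : S ⊆ T) (hT : T ⊆ M)
    (h : ∀ e ∈ T, e ∉ S → ¬ IsGoodFor w M e) : w T ≤ w S :=
  neg_le_neg_iff.1 (hw.neg.le_of_subset hST hT fun e heT heS => isChoreFor_neg.not.2 (h e heT heS))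

theorem le_of_exchange (hw : IsMixedValuation w M) (hS : S ⊆ M) (hT : T ⊆ M)
    (hlost : ∀ e ∈ S, e ∉ T → ¬ IsGoodFor w M e)
    (hgained : ∀ e ∈ T, e ∉ S → ¬ IsChoreFor w M e) : w S ≤ w T :=
  calc
    w S ≤ w (S ∪ T) := hw.le_of_subset subset_union_left (union_subset hS hT) fun e he heS =>
      hgained e ((mem_union.1 he).resolve_left heS) heS
    _ ≤ w T := hw.ge_of_subset subset_union_right (union_subset hS hT) fun e he heT =>
      hlost e ((mem_union.1 he).resolve_right heT) heT

end IsMixedValuation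

end Valuation

/-! ### Envy in partial orientations -/

section Envy

variable {M : Finset (Sym2 V)} {v : V → Finset (Sym2 V) → ℝ} {X : V → Finset (Sym2 V)}
  {e : Sym2 V} {i j k : V}

namespace ValidInstance

theorem isMixedValuation (hM : ValidInstance M v) (i : V) : IsMixedValuation (v i) M :=
  hM.2.1 i

theorem not_isChoreFor_of_notMem (hM : ValidInstance M v) (he : e ∈ M) (hi : i ∉ e) :
    ¬ IsChoreFor (v i) M e :=
  (hM.2.2 i e he hi).not_isChoreFor

theorem mem_of_isGoodFor (hM : ValidInstance M v) (he : e ∈ M) (hg : IsGoodFor (v i) M e) :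
    i ∈ e := by
  by_contra hi
  exact (hM.2.2 i e he hi).not_isGoodFor hg

theorem mem_egeNonneg (hM : ValidInstance M v) :
    e ∈ EgeNonneg v M i ↔ e ∈ M ∧ i ∈ e ∧ ¬ IsChoreFor (v i) M e := by
  refine mem_filter.trans (and_congr_right fun he => and_congr_right fun _ => ⟨?_, fun hc => ?_⟩)
  · rintro (hgood | hdummy)
    exacts [hgood.not_isChoreFor, hdummy.not_isChoreFor]
  · rcases hM.isMixedValuation i e he with hgood | hchore | hdummy
    exacts [.inl hgood, absurd hchore hc, .inr hdummy]

theorem eq_singleton_of_forall_mem (hM : ValidInstance M v) (he : e ∈ M) (hall : ∀ k, k ∈ e) :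
    M = {e} := by
  refine eq_singleton_iff_unique_mem.2 ⟨he, fun e' he' => ?_⟩
  induction e' using Sym2.ind with
  | _ a b =>
    have hab : a ≠ b := by simpa using hM.1 _ he'
    exact ((Sym2.mem_and_mem_iff hab).1 ⟨hall a, hall b⟩).symm

end ValidInstance

theorem mem_unallocated [Fintype V] : e ∈ Unallocated M X ↔ e ∈ M ∧ ∀ k, e ∉ X k := by
  simp [Unallocated]

omit [DecidableEq V] in
theorem Envies.ne (h : Envies v X i j) : i ≠ j := by
  rintro rfl
  exact lt_irrefl _ h

theorem Envies.mk_mem (h : Envies v X i j) (hM : ValidInstance M v)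
    (hX : IsPartialOrientation M X) (hchore : ∀ e ∈ X i, ¬ IsChoreFor (v i) M e) :
    s(i, j) ∈ X j := by
  by_contra hij
  refine h.not_ge ((hM.isMixedValuation i).le_of_exchange (hX.1 j) (hX.1 i) ?_
    fun e he _ => hchore e he)
  intro e he _ hg
  have hedge : e = s(i, j) :=
    (Sym2.mem_and_mem_iff h.ne).1 ⟨hM.mem_of_isGoodFor (hX.1 j he) hg, hX.2.2 j e he⟩
  exact hij (hedge ▸ he)

theorem condOwnStrict_of_not_isChoreFor (hM : ValidInstance M v) (hX : ∀ i, X i ⊆ M)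
    (hchore : ∀ i, ∀ e ∈ X i, ¬ IsChoreFor (v i) M e) : CondOwnStrict v X := by
  intro i j _ e _ hlt
  refine absurd hlt (not_lt.2 ?_)
  exact (hM.isMixedValuation i).le_of_subset (erase_subset e (X i)) (hX i) fun x hx _ =>
    hchore i x hx

theorem exists_efx_singleton (v : V → Finset (Sym2 V) → ℝ) (e : Sym2 V) (i : V) :
    ∃ X, IsAllocation {e} X ∧ CondEnviedWeak v X ∧ CondOwnStrict v X := by
  refine ⟨Function.update (fun _ => ∅) i {e},
    ⟨fun k => ?_, fun e' he' => ⟨i, ?_, fun k hk => ?_⟩⟩, ?_, ?_⟩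
  · obtain rfl | hk := eq_or_ne k i <;> simp [*]
  · simpa using he'
  · by_contra hki
    simp [hki] at hk
  · intro a b hab x hx _
    obtain rfl | hb := eq_or_ne b i
    · obtain rfl : x = e := by simpa using hx
      simp [hab.ne]
    · simp [hb] at hx
  · intro a b hab x hx _
    obtain rfl | ha := eq_or_ne a i
    · obtain rfl : x = e := by simpa using hx
      simp [hab.ne.symm]
    · simp [ha] at hx

variable [Fintype V]

namespace Props

theorem value_singleton_le (hP : Props M v X) (hM : ValidInstance M v)
    (he : e ∈ Unallocated M X) (hie : i ∈ e) (hc : ¬ IsChoreFor (v i) M e) :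
    v i {e} ≤ v i (X i) :=
  hP.1 i e (mem_inter.2 ⟨hM.mem_egeNonneg.2 ⟨(mem_unallocated.1 he).1, hie, hc⟩, he⟩)

theorem exists_safeFor_safeFor (hP : Props M v X) (hi : Envied v X i) (hj : Envied v X j) :
    ∃ k, ¬ Envied v X k ∧ SafeFor v M X k i ∧ SafeFor v M X k j :=
  hP.2.2.1 i j hi hj

theorem not_isChoreFor (hP : Props M v X) (he : e ∈ X i) : ¬ IsChoreFor (v i) M e :=
  hP.2.2.2.1 i e he

theorem exists_eq_singleton (hP : Props M v X) (hi : Envied v X i) : ∃ e, X i = {e} :=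
  card_eq_one.1 (hP.2.2.2.2.1 i hi)

theorem eq_of_envies (hP : Props M v X) (hj : Envies v X j i) (hk : Envies v X k i) : j = k :=
  (hP.2.2.2.2.2.1 i ⟨k, hk⟩).unique hj hk

theorem exists_not_envied_envies (hP : Props M v X) (hi : Envied v X i) :
    ∃ r t, ¬ Envied v X r ∧ Envies v X r t ∧
      SafeFor v M X r i ∧ (t = i ∨ SafeFor v M X t i) := by
  obtain ⟨-, -, -, -, -, -, hacyclic, hsafe⟩ := hP
  obtain ⟨s, f, rfl, hf, hs⟩ := exists_chain_to_minimal hacyclic i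
  have hroot : ¬ Envied v X (f s) := not_exists.2 hs
  obtain _ | s := s
  · exact absurd hi hroot
  have hsafe' : ∀ l, 1 ≤ l → l ≤ s + 1 → SafeFor v M X (f l) (f 0) := by
    refine hsafe (s + 1) f (by omega) (fun l hl hls => ?_) hroot
    simpa only [Nat.sub_add_cancel hl] using hf (l - 1) (by omega)
  refine ⟨f (s + 1), f s, hroot, hf s (by omega), hsafe' _ (by omega) le_rfl, ?_⟩
  obtain rfl | hpos := Nat.eq_zero_or_pos s
  exacts [.inl rfl, .inr (hsafe' s hpos (by omega))]

theorem mk_notMem_unallocated (hP : Props M v X) (hM : ValidInstance M v)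
    (hX : IsPartialOrientation M X) (h : Envies v X i j) : s(i, j) ∉ Unallocated M X := fun he =>
  (mem_unallocated.1 he).2 j (h.mk_mem hM hX fun _ => hP.not_isChoreFor)

end Props

end Envy

/-! ### Recipients of unallocated edges -/

section Recipient

variable [Fintype V] {M : Finset (Sym2 V)} {v : V → Finset (Sym2 V) → ℝ}
  {X : V → Finset (Sym2 V)} {e : Sym2 V} {i j k : V}

/-- Agent `k` is a suitable recipient of the unallocated edge `e`: giving `e` to `k` neither hurts
`k`, nor creates envy towards `k`, nor makes existing envy towards `k` worse. -/
structure IsRecipient (M : Finset (Sym2 V)) (v : V → Finset (Sym2 V) → ℝ)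
    (X : V → Finset (Sym2 V)) (e : Sym2 V) (k : V) : Prop where
  not_isChoreFor : ¬ IsChoreFor (v k) M e
  mem_or_safeFor : k ∈ e ∨ ∀ i ∈ e, ¬ IsChoreFor (v i) M e → SafeFor v M X k i
  isChoreFor_of_envies : ∀ j, Envies v X j k → IsChoreFor (v j) M e

theorem isRecipient_of_mem (hk : k ∈ e) (henv : ¬ Envied v X k) (hc : ¬ IsChoreFor (v k) M e) :
    IsRecipient M v X e k :=
  ⟨hc, .inl hk, fun j hj => absurd ⟨j, hj⟩ henv⟩

theorem isRecipient_of_notMem (hM : ValidInstance M v) (he : e ∈ M) (hk : k ∉ e)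
    (hsafe : ∀ i ∈ e, ¬ IsChoreFor (v i) M e → SafeFor v M X k i)
    (hchore : ∀ j, Envies v X j k → IsChoreFor (v j) M e) : IsRecipient M v X e k :=
  ⟨hM.not_isChoreFor_of_notMem he hk, .inr hsafe, hchore⟩

theorem exists_isRecipient_of_forall_isChoreFor (hM : ValidInstance M v)
    (hX : IsPartialOrientation M X) (hP : Props M v X) (he : e ∈ Unallocated M X)
    (hchore : ∀ i ∈ e, IsChoreFor (v i) M e) (hk : k ∉ e) : ∃ k', IsRecipient M v X e k' := by
  have heM : e ∈ M := (mem_unallocated.1 he).1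
  have hsafe : ∀ k', ∀ i ∈ e, ¬ IsChoreFor (v i) M e → SafeFor v M X k' i := fun _ i hi hc =>
    absurd (hchore i hi) hc
  by_cases hkenv : Envied v X k
  · obtain ⟨r, t, hr, hrt, -, -⟩ := hP.exists_not_envied_envies hkenv
    by_cases hre : r ∈ e
    · have hte : t ∉ e := by
        intro hte
        obtain rfl : e = s(r, t) := (Sym2.mem_and_mem_iff hrt.ne).1 ⟨hre, hte⟩
        exact hP.mk_notMem_unallocated hM hX hrt he
      exact ⟨t, isRecipient_of_notMem hM heM hte (hsafe t) fun j hj =>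
        hP.eq_of_envies hrt hj ▸ hchore r hre⟩
    · exact ⟨r, isRecipient_of_notMem hM heM hre (hsafe r) fun j hj => absurd ⟨j, hj⟩ hr⟩
  · exact ⟨k, isRecipient_of_notMem hM heM hk (hsafe k) fun j hj => absurd ⟨j, hj⟩ hkenv⟩

theorem exists_isRecipient_of_isChoreFor_right (hM : ValidInstance M v)
    (hX : IsPartialOrientation M X) (hP : Props M v X) (he : s(i, j) ∈ Unallocated M X)
    (hi : Envied v X i) (hj : IsChoreFor (v j) M s(i, j)) :
    ∃ k, IsRecipient M v X s(i, j) k := by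
  have heM : s(i, j) ∈ M := (mem_unallocated.1 he).1
  have hsafe : ∀ k, SafeFor v M X k i →
      ∀ a ∈ s(i, j), ¬ IsChoreFor (v a) M s(i, j) → SafeFor v M X k a := by
    intro k hk a ha hac
    obtain rfl | rfl := Sym2.mem_iff.1 ha
    exacts [hk, absurd hj hac]
  obtain ⟨r, t, hr, hrt, hri, hti⟩ := hP.exists_not_envied_envies hi
  obtain rfl | hrj := eq_or_ne r j
  · have ht : t ≠ i := by
      rintro rfl
      exact hP.mk_notMem_unallocated hM hX hrt (Sym2.eq_swap ▸ he)
    have hte : t ∉ s(i, r) := by simp [ht, hrt.ne.symm]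
    exact ⟨t, isRecipient_of_notMem hM heM hte (hsafe t (hti.resolve_left ht)) fun a ha =>
      hP.eq_of_envies hrt ha ▸ hj⟩
  · have hre : r ∉ s(i, j) := by
      have hne : r ≠ i := fun h => hr (h ▸ hi)
      simp [hne, hrj]
    exact ⟨r, isRecipient_of_notMem hM heM hre (hsafe r hri) fun a ha => absurd ⟨a, ha⟩ hr⟩

theorem exists_isRecipient_of_envied_envied (hM : ValidInstance M v) (hP : Props M v X)
    (he : s(i, j) ∈ M) (hi : Envied v X i) (hj : Envied v X j) :
    ∃ k, IsRecipient M v X s(i, j) k := by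
  obtain ⟨k, hk, hki, hkj⟩ := hP.exists_safeFor_safeFor hi hj
  have hke : k ∉ s(i, j) := by
    rw [Sym2.mem_iff]
    rintro (rfl | rfl) <;> contradiction
  refine ⟨k, isRecipient_of_notMem hM he hke ?_ fun a ha => absurd ⟨a, ha⟩ hk⟩
  intro a ha _
  obtain rfl | rfl := Sym2.mem_iff.1 ha
  exacts [hki, hkj]

theorem exists_isRecipient (hM : ValidInstance M v) (hX : IsPartialOrientation M X)
    (hP : Props M v X) (he : e ∈ Unallocated M X) (hk : k ∉ e) :
    ∃ k', IsRecipient M v X e k' := by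
  by_cases hchore : ∀ i ∈ e, IsChoreFor (v i) M e
  · exact exists_isRecipient_of_forall_isChoreFor hM hX hP he hchore hk
  push Not at hchore
  obtain ⟨i, hie, hi⟩ := hchore
  obtain ⟨j, rfl⟩ := Sym2.mem_iff_exists.1 hie
  by_cases hienv : Envied v X i
  · by_cases hj : IsChoreFor (v j) M s(i, j)
    · exact exists_isRecipient_of_isChoreFor_right hM hX hP he hienv hj
    by_cases hjenv : Envied v X j
    · exact exists_isRecipient_of_envied_envied hM hP (mem_unallocated.1 he).1 hienv hjenv
    · exact ⟨j, isRecipient_of_mem (Sym2.mem_mk_right i j) hjenv hj⟩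
  · exact ⟨i, isRecipient_of_mem hie hienv hi⟩

end Recipient

/-! ### Completing the orientation -/

section Completion

variable [Fintype V] {M : Finset (Sym2 V)} {v : V → Finset (Sym2 V) → ℝ}
  {X : V → Finset (Sym2 V)} {r : Sym2 V → V} {e : Sym2 V} {i k : V}

/-- The complete allocation obtained from the partial allocation `X` by giving each unallocated
edge `e` to the agent `r e`. The values of `r` at allocated edges are irrelevant. -/
noncomputable def completion (M : Finset (Sym2 V)) (X : V → Finset (Sym2 V)) (r : Sym2 V → V)
    (k : V) : Finset (Sym2 V) :=
  X k ∪ {e ∈ Unallocated M X | r e = k}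

theorem mem_completion : e ∈ completion M X r k ↔ e ∈ X k ∨ e ∈ Unallocated M X ∧ r e = k := by
  simp [completion]

theorem subset_completion : X k ⊆ completion M X r k :=
  subset_union_left

theorem completion_subset (hX : X k ⊆ M) : completion M X r k ⊆ M :=
  union_subset hX ((filter_subset _ _).trans sdiff_subset)

theorem isAllocation_completion (hX : ∀ i, X i ⊆ M) (hdisj : ∀ i j, i ≠ j → Disjoint (X i) (X j)) :
    IsAllocation M (completion M X r) := by
  refine ⟨fun i => completion_subset (hX i), fun e heM => ?_⟩
  by_cases he : e ∈ Unallocated M X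
  · refine ⟨r e, mem_completion.2 (.inr ⟨he, rfl⟩), fun k hk => ?_⟩
    exact ((mem_completion.1 hk).resolve_left ((mem_unallocated.1 he).2 k)).2.symm
  · obtain ⟨k, hk⟩ : ∃ k, e ∈ X k := by simpa [mem_unallocated, heM] using he
    refine ⟨k, subset_completion hk, fun j hj => ?_⟩
    have hej : e ∈ X j := (mem_completion.1 hj).resolve_right fun h => he h.1
    by_contra hjk
    exact disjoint_left.1 (hdisj j k hjk) hej hk

theorem value_completion_le_of_safeFor (hM : ValidInstance M v) (hX : X k ⊆ M)
    (hsafe : SafeFor v M X k i) : v i (completion M X r k) ≤ v i (X i) := by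
  have hsub : EgeNonneg v M i ∩ Unallocated M X ⊆ M := inter_subset_right.trans sdiff_subset
  refine ((hM.isMixedValuation i).le_of_exchange (completion_subset hX)
    (union_subset hX hsub) ?_ ?_).trans hsafe
  · intro e he hnot hg
    rw [mem_union, mem_inter, hM.mem_egeNonneg] at hnot
    have heM : e ∈ M := completion_subset hX he
    exact hnot ((mem_completion.1 he).imp_right fun h =>
      ⟨⟨heM, hM.mem_of_isGoodFor heM hg, hg.not_isChoreFor⟩, h.1⟩)
  · intro e he hnot
    have he' := (mem_union.1 he).resolve_left fun h => hnot (subset_completion h)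
    exact (hM.mem_egeNonneg.1 (mem_inter.1 he').1).2.2

variable (hM : ValidInstance M v) (hX : IsPartialOrientation M X) (hP : Props M v X)
  (hr : ∀ e ∈ Unallocated M X, IsRecipient M v X e (r e))

include hP hr in
theorem not_isChoreFor_of_mem_completion (he : e ∈ completion M X r i) :
    ¬ IsChoreFor (v i) M e := by
  obtain hold | ⟨hnew, rfl⟩ := mem_completion.1 he
  exacts [hP.not_isChoreFor hold, (hr e hnew).not_isChoreFor]

include hM hX hr in
theorem eq_mk_of_isGoodFor_of_mem_completion (hne : i ≠ k) (hsafe : ¬ SafeFor v M X k i)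
    (he : e ∈ completion M X r k) (hg : IsGoodFor (v i) M e) : e = s(i, k) := by
  have hie : i ∈ e := hM.mem_of_isGoodFor (completion_subset (hX.1 k) he) hg
  refine (Sym2.mem_and_mem_iff hne).1 ⟨hie, ?_⟩
  obtain hold | ⟨hnew, rfl⟩ := mem_completion.1 he
  · exact hX.2.2 k e hold
  · exact (hr e hnew).mem_or_safeFor.resolve_right fun h => hsafe (h i hie hg.not_isChoreFor)

include hM hX hP hr in
theorem value_completion_le_of_not_envies (hne : i ≠ k) (henv : ¬ Envies v X i k) :
    v i (completion M X r k) ≤ v i (X i) := by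
  by_cases hsafe : SafeFor v M X k i
  · exact value_completion_le_of_safeFor hM (hX.1 k) hsafe
  have hw := hM.isMixedValuation i
  have hCM : completion M X r k ⊆ M := completion_subset (hX.1 k)
  have hgood : ∀ e ∈ completion M X r k, IsGoodFor (v i) M e → e = s(i, k) := fun e =>
    eq_mk_of_isGoodFor_of_mem_completion hM hX hr hne hsafe
  by_cases hedge : s(i, k) ∈ Unallocated M X ∧ ¬ IsChoreFor (v i) M s(i, k)
  · obtain ⟨hedge, hc⟩ := hedge
    calc
      v i (completion M X r k) ≤ v i {s(i, k)} :=
        hw.le_of_exchange hCM (singleton_subset_iff.2 (mem_unallocated.1 hedge).1)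
          (fun e he hnot hg => hnot (mem_singleton.2 (hgood e he hg)))
          fun e he _ => mem_singleton.1 he ▸ hc
      _ ≤ v i (X i) := hP.value_singleton_le hM hedge (Sym2.mem_mk_left i k) hc
  · calc
      v i (completion M X r k) ≤ v i (X k) := by
        refine hw.ge_of_subset subset_completion hCM fun e he hnot hg => hedge ?_
        obtain rfl := hgood e he hg
        exact ⟨((mem_completion.1 he).resolve_left hnot).1, hg.not_isChoreFor⟩
      _ ≤ v i (X i) := not_lt.1 henv

include hM hX hP hr in
theorem Envies.of_completion (h : Envies v (completion M X r) i k) : Envies v X i k := by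
  by_contra henv
  refine h.not_ge ((value_completion_le_of_not_envies hM hX hP hr h.ne henv).trans ?_)
  exact (hM.isMixedValuation i).le_of_subset subset_completion (completion_subset (hX.1 i))
    fun e he _ => not_isChoreFor_of_mem_completion hP hr he

include hM hX hP hr in
theorem condEnviedWeak_completion : CondEnviedWeak v (completion M X r) := by
  intro i k hC e he hle
  have henv : Envies v X i k := hC.of_completion hM hX hP hr
  have hCM : ∀ j, completion M X r j ⊆ M := fun j => completion_subset (hX.1 j)
  have hnew : ∀ x ∈ completion M X r k, x ∉ X k → IsChoreFor (v i) M x := by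
    intro x hx hxX
    obtain ⟨hxR, rfl⟩ := (mem_completion.1 hx).resolve_left hxX
    exact (hr x hxR).isChoreFor_of_envies i henv
  have heX : e ∈ X k := by
    by_contra hnot
    exact hle.not_gt ((hnew e he hnot).lt_erase he (hCM k))
  obtain ⟨e', hXk⟩ := hP.exists_eq_singleton ⟨i, henv⟩
  obtain rfl : e = e' := mem_singleton.1 (hXk ▸ heX)
  refine (hM.isMixedValuation i).le_of_exchange ((erase_subset _ _).trans (hCM k)) (hCM i) ?_
    fun x hx _ => not_isChoreFor_of_mem_completion hP hr hx
  intro x hx _ hg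
  obtain ⟨hxe, hx⟩ := mem_erase.1 hx
  exact hg.not_isChoreFor (hnew x hx (by simpa [hXk] using hxe))

include hM hX hP hr in
theorem condOwnStrict_completion : CondOwnStrict v (completion M X r) :=
  condOwnStrict_of_not_isChoreFor hM (fun i => completion_subset (hX.1 i)) fun _ _ =>
    not_isChoreFor_of_mem_completion hP hr

end Completion

/-- For every mixed instance on a simple graph: if there is a partial
orientation that is EFX⁰₋ and satisfies Properties (1)–(8), then there is a complete
allocation of all edges that is EFX⁰₋. -/
theorem stmt14 {V : Type*} [Fintype V] [DecidableEq V]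
    (M : Finset (Sym2 V)) (v : V → Finset (Sym2 V) → ℝ)
    (hvalid : ValidInstance M v)
    (hpart : ∃ Xp : V → Finset (Sym2 V),
        IsPartialOrientation M Xp ∧
        CondEnviedWeak v Xp ∧ CondOwnStrict v Xp ∧
        Props M v Xp) :
    ∃ X : V → Finset (Sym2 V),
      IsAllocation M X ∧ CondEnviedWeak v X ∧ CondOwnStrict v X := by
  obtain ⟨X, hX, -, -, hP⟩ := hpart
  by_cases hall : ∃ e ∈ Unallocated M X, ∀ k, k ∈ e
  · obtain ⟨e, he, hall⟩ := hall
    obtain rfl := hvalid.eq_singleton_of_forall_mem (mem_unallocated.1 he).1 hall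
    exact exists_efx_singleton v e e.out.1
  push Not at hall
  have hrec : ∀ e, ∃ k, e ∈ Unallocated M X → IsRecipient M v X e k := by
    intro e
    by_cases he : e ∈ Unallocated M X
    · obtain ⟨k, hk⟩ := hall e he
      exact (exists_isRecipient hvalid hX hP he hk).imp fun _ h _ => h
    · exact ⟨e.out.1, fun h => absurd h he⟩
  choose r hr using hrec
  exact ⟨completion M X r, isAllocation_completion hX.1 hX.2.1,
    condEnviedWeak_completion hvalid hX hP hr, condOwnStrict_completion hvalid hX hP hr⟩
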